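/- Let w be a Kreweras word of length 3n. Then for every i ∈ {1,…,3n}, ε_{evac(w)}(i) = −ε_w(3n+1−i), where −B := C and −C := B. -/

import Mathlib

/-- The three letters of a Kreweras word. -/
inductive KLetter : Type
  | A | B | C
deriving DecidableEq, Repr

open KLetter

/-- `w` is a Kreweras word of length `3 * n`: it has `n` `A`'s, `n` `B`'s, `n` `C`'s,
and every prefix has at least as many `A`'s as `B`'s and at least as many `A`'s as `C`'s. -/
def IsKrewerasWord (n : ℕ) (w : List KLetter) : Prop :=
  w.length = 3 * n ∧ w.count A = n ∧ w.count B = n ∧ w.count C = n ∧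
  ∀ k : ℕ, (w.take k).count B ≤ (w.take k).count A ∧
           (w.take k).count C ≤ (w.take k).count A

/-- `kiota w` is the smallest index `ι ≥ 1` (1-indexed) such that the prefix of
length `ι` of `w` has equally many `A`'s as `B`'s, or equally many `A`'s as `C`'s
(and `0` if no such index exists). -/
def kiota (w : List KLetter) : ℕ :=
  (((List.range (w.length + 1)).filter fun k =>
      decide (1 ≤ k) &&
      (((w.take k).count A == (w.take k).count B) ||
       ((w.take k).count A == (w.take k).count C))).headD 0)

/-- Promotion of a Kreweras word:
`pro w = (w₂, …, w_{ι-1}, A, w_{ι+1}, …, w_{3n}, w_ι)` where `ι = kiota w`. -/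
def pro (w : List KLetter) : List KLetter :=
  ((w.drop 1).set (kiota w - 2) A) ++ [w.getD (kiota w - 1) A]

/-- The trip permutation `σ_w` of a Kreweras word of length `3 * n`, as a function on
1-indexed positions: `σ_w i` is the unique element of `{1, …, 3n}` congruent to
`kiota (pro^[i-1] w) + i - 1` modulo `3 * n`. -/
def ksigma (n : ℕ) (w : List KLetter) (i : ℕ) : ℕ :=
  (kiota (pro^[i - 1] w) + i - 2) % (3 * n) + 1

/-- `keps w i` is the letter of `pro^[i-1] w` in (1-indexed) position `kiota (pro^[i-1] w)`. -/
def keps (w : List KLetter) (i : ℕ) : KLetter :=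
  (pro^[i - 1] w).getD (kiota (pro^[i - 1] w) - 1) A

/-- The negation swapping `B` and `C` (and fixing `A`). -/
def negL : KLetter → KLetter
  | A => A
  | B => C
  | C => B

open Classical in
/-- The involution `τ_i` on Kreweras words of length `3 * n`: swap the letters in
(1-indexed) positions `i` and `i + 1` if the result is again a Kreweras word,
and otherwise do nothing. -/
noncomputable def tau (n i : ℕ) (w : List KLetter) : List KLetter :=
  let w' := (w.set (i - 1) (w.getD i A)).set i (w.getD (i - 1) A)
  if IsKrewerasWord n w' then w' else w

/-- `tauDown n j = τ_j ∘ τ_{j-1} ∘ ⋯ ∘ τ_1`. -/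
noncomputable def tauDown (n : ℕ) : ℕ → List KLetter → List KLetter
  | 0, w => w
  | j + 1, w => tau n (j + 1) (tauDown n j w)

/-- `evacAux n j = (tauDown n 1) ∘ (tauDown n 2) ∘ ⋯ ∘ (tauDown n j)`. -/
noncomputable def evacAux (n : ℕ) : ℕ → List KLetter → List KLetter
  | 0, w => w
  | j + 1, w => evacAux n j (tauDown n (j + 1) w)

/-- Evacuation on Kreweras words of length `3 * n`:
`evac = (τ_1) ∘ (τ_2 ∘ τ_1) ∘ ⋯ ∘ (τ_{3n-1} ∘ ⋯ ∘ τ_2 ∘ τ_1)`. -/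
noncomputable def evac (n : ℕ) (w : List KLetter) : List KLetter :=
  evacAux n (3 * n - 1) w

/-- `tauAsc n k c = τ_{k+c-1} ∘ ⋯ ∘ τ_{k+1} ∘ τ_k`. -/
noncomputable def tauAsc (n k : ℕ) : ℕ → List KLetter → List KLetter
  | 0, w => w
  | j + 1, w => tau n (k + j) (tauAsc n k j w)

/-- `evacStarAux n j = (tauAsc n 1 (3n-1)) ∘ (tauAsc n 2 (3n-2)) ∘ ⋯ ∘ (tauAsc n j (3n-j))`. -/
noncomputable def evacStarAux (n : ℕ) : ℕ → List KLetter → List KLetter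
  | 0, w => w
  | j + 1, w => evacStarAux n j (tauAsc n (j + 1) (3 * n - (j + 1)) w)

/-- Dual evacuation on Kreweras words of length `3 * n`:
`evac* = (τ_{3n-1} ∘ ⋯ ∘ τ_1) ∘ (τ_{3n-1} ∘ ⋯ ∘ τ_2) ∘ ⋯ ∘ (τ_{3n-1})`. -/
noncomputable def evacStar (n : ℕ) (w : List KLetter) : List KLetter :=
  evacStarAux n (3 * n - 1) w

/-- The three-element "V"-shaped poset: `a < b`, `a < c`, with `b`, `c` incomparable. -/
inductive VP : Type
  | a | b | c
deriving DecidableEq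

instance : PartialOrder VP where
  le x y := x = y ∨ x = VP.a
  le_refl x := Or.inl rfl
  le_trans x y z hxy hyz := by
    rcases hxy with rfl | rfl
    · exact hyz
    · exact Or.inr rfl
  le_antisymm x y hxy hyx := by
    rcases hxy with rfl | rfl
    · rfl
    · rcases hyx with rfl | rfl <;> rfl

/-- The labeling of elements of `V(n) = VP × Fin n` by letters. -/
def vlabel {n : ℕ} (p : VP × Fin n) : KLetter :=
  match p.1 with
  | VP.a => A
  | VP.b => B
  | VP.c => C

/-- `L` is a linear extension of `V(n) = VP × Fin n` (with the product order):
a list of all elements of `V(n)`, each appearing once, such that `L_i ≤ L_j`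
implies `i ≤ j`. -/
def IsLinearExtension (n : ℕ) (L : List (VP × Fin n)) : Prop :=
  L.Nodup ∧ (∀ p : VP × Fin n, p ∈ L) ∧
  ∀ i j : Fin L.length, L.get i ≤ L.get j → (i : ℕ) ≤ (j : ℕ)

/-- A connected Kreweras word: a Kreweras word of length `3 * n` having no proper
nonempty consecutive substring which is itself a Kreweras word. -/
def ConnectedKrewerasWord (n : ℕ) (w : List KLetter) : Prop :=
  IsKrewerasWord n w ∧
  ∀ (u : List KLetter) (m : ℕ), u <:+: w → u ≠ [] → u ≠ w → ¬ IsKrewerasWord m u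

namespace KE

/-- Both inequalities of the Kreweras condition for a single prefix. -/
def ok (l : List KLetter) : Prop := l.count B ≤ l.count A ∧ l.count C ≤ l.count A

theorem ok_perm {l m : List KLetter} (h : l.Perm m) : ok l ↔ ok m := by
  unfold ok; rw [h.count_eq, h.count_eq, h.count_eq]

theorem K_iff (n : ℕ) (w : List KLetter) : IsKrewerasWord n w ↔
    w.length = 3 * n ∧ w.count A = n ∧ w.count B = n ∧ w.count C = n ∧ ∀ l, l <+: w → ok l := by
  unfold IsKrewerasWord
  constructor
  · rintro ⟨h1, h2, h3, h4, h5⟩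
    refine ⟨h1, h2, h3, h4, fun l hl => ?_⟩
    have := h5 l.length
    rw [← List.prefix_iff_eq_take.1 hl] at this
    exact this
  · rintro ⟨h1, h2, h3, h4, h5⟩
    exact ⟨h1, h2, h3, h4, fun k => h5 _ (List.take_prefix k w)⟩

theorem K_ok {n : ℕ} {w l : List KLetter} (h : IsKrewerasWord n w) (hl : l <+: w) : ok l :=
  ((K_iff n w).1 h).2.2.2.2 l hl

theorem prefix_split {l p t : List KLetter} (h : l <+: p ++ t) :
    l <+: p ∨ ∃ r, l = p ++ r ∧ r <+: t := by
  rcases List.prefix_or_prefix_of_prefix h (List.prefix_append p t) with h1 | ⟨r, rfl⟩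
  · exact Or.inl h1
  · exact Or.inr ⟨r, rfl, (List.prefix_append_right_inj _).1 h⟩

theorem K_swap {n : ℕ} {p q : List KLetter} {a b : KLetter}
    (h : IsKrewerasWord n (p ++ a :: b :: q)) :
    IsKrewerasWord n (p ++ b :: a :: q) ↔ ok (p ++ [b]) := by
  constructor
  · intro h'
    exact K_ok h' ⟨a :: q, by simp⟩
  · intro hb
    have hp : (p ++ a :: b :: q).Perm (p ++ b :: a :: q) :=
      List.Perm.append_left p (List.Perm.swap _ _ _)
    obtain ⟨h1, h2, h3, h4, h5⟩ := (K_iff n _).1 h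
    refine (K_iff n _).2 ⟨by rw [← hp.length_eq, h1], by rw [← hp.count_eq, h2],
      by rw [← hp.count_eq, h3], by rw [← hp.count_eq, h4], ?_⟩
    intro l hl
    rcases prefix_split hl with hl | ⟨r, rfl, hr⟩
    · exact h5 l (hl.trans (List.prefix_append _ _))
    · rcases r with _ | ⟨x, r⟩
      · exact h5 _ (by simp)
      · obtain ⟨e1, hr2⟩ := List.cons_prefix_cons.1 hr
        subst e1
        rcases r with _ | ⟨y, r⟩
        · exact hb
        · obtain ⟨e2, hr3⟩ := List.cons_prefix_cons.1 hr2
          subst e2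
          have : (p ++ y :: x :: r).Perm (p ++ x :: y :: r) :=
            List.Perm.append_left p (List.Perm.swap _ _ _)
          rw [← ok_perm this]
          apply h5
          rw [List.prefix_append_right_inj]
          simpa using hr3

theorem tau_spec {n : ℕ} {p q : List KLetter} {a b : KLetter}
    (h : IsKrewerasWord n (p ++ a :: b :: q)) :
    (ok (p ++ [b]) → tau n (p.length + 1) (p ++ a :: b :: q) = p ++ b :: a :: q) ∧
    (¬ ok (p ++ [b]) → tau n (p.length + 1) (p ++ a :: b :: q) = p ++ a :: b :: q) := by
  have e : ((p ++ a :: b :: q).set (p.length + 1 - 1) ((p ++ a :: b :: q).getD (p.length + 1) A)).set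
      (p.length + 1) ((p ++ a :: b :: q).getD (p.length + 1 - 1) A) = p ++ b :: a :: q := by
    simp [List.getD, List.set_append]
  unfold tau
  simp only
  rw [e]
  constructor
  · intro hh; rw [if_pos ((K_swap h).2 hh)]
  · intro hh; rw [if_neg (fun h' => hh ((K_swap h).1 h'))]

theorem K_tau {n i : ℕ} {w : List KLetter} (h : IsKrewerasWord n w) :
    IsKrewerasWord n (tau n i w) := by
  unfold tau
  simp only
  split_ifs with h'
  · exact h'
  · exact h

theorem split2 {w : List KLetter} {i : ℕ} (hi : 1 ≤ i) (h : i + 1 ≤ w.length) :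
    ∃ p a b q, w = p ++ a :: b :: q ∧ p.length + 1 = i := by
  refine ⟨w.take (i - 1), w[i - 1], w[i], w.drop (i + 1), ?_, by simp; omega⟩
  conv_lhs => rw [← List.take_append_drop (i - 1) w]
  rw [List.drop_eq_getElem_cons (by omega : i - 1 < w.length),
    List.drop_eq_getElem_cons (by omega : i - 1 + 1 < w.length)]
  simp [Nat.sub_add_cancel hi]

theorem tau_tau {n i : ℕ} {w : List KLetter} (h : IsKrewerasWord n w) (hi : 1 ≤ i)
    (hi' : i + 1 ≤ 3 * n) : tau n i (tau n i w) = w := by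
  obtain ⟨p, a, b, q, rfl, rfl⟩ := split2 hi (h.1 ▸ hi' : i + 1 ≤ w.length)
  by_cases hb : ok (p ++ [b])
  · have h2 := K_tau (i := p.length + 1) h
    rw [(tau_spec h).1 hb] at h2 ⊢
    exact (tau_spec h2).1 (K_ok h ⟨b :: q, by simp⟩)
  · rw [(tau_spec h).2 hb, (tau_spec h).2 hb]

theorem tau_comm {n i j : ℕ} {w : List KLetter} (h : IsKrewerasWord n w) (hi : 1 ≤ i)
    (hij : i + 2 ≤ j) (hj : j + 1 ≤ 3 * n) : tau n j (tau n i w) = tau n i (tau n j w) := by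
  obtain ⟨p, a, b, t, rfl, rfl⟩ := split2 hi (by have := h.1; omega : i + 1 ≤ w.length)
  have hl := h.1
  simp only [List.length_append, List.length_cons] at hl
  obtain ⟨q, c, d, r, rfl, hq⟩ := split2 (w := t) (i := j - p.length - 2) (by omega) (by omega)
  have key : ∀ x y : KLetter, (x = a ∧ y = b ∨ x = b ∧ y = a) →
      IsKrewerasWord n (p ++ x :: y :: (q ++ c :: d :: r)) →
      (ok (p ++ [a,b] ++ q ++ [d]) → tau n j (p ++ x :: y :: (q ++ c :: d :: r)) =
        p ++ x :: y :: (q ++ d :: c :: r)) ∧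
      (¬ ok (p ++ [a,b] ++ q ++ [d]) → tau n j (p ++ x :: y :: (q ++ c :: d :: r)) =
        p ++ x :: y :: (q ++ c :: d :: r)) := by
    intro x y hxy hk
    have e1 : ∀ c d, p ++ x :: y :: (q ++ c :: d :: r) = (p ++ [x,y] ++ q) ++ c :: d :: r := by simp
    have e2 : j = (p ++ [x,y] ++ q).length + 1 := by simp; omega
    have e3 : ok (p ++ [a,b] ++ q ++ [d]) ↔ ok (p ++ [x,y] ++ q ++ [d]) := by
      apply ok_perm
      apply List.Perm.append_right
      apply List.Perm.append_right
      apply List.Perm.append_left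
      rcases hxy with ⟨rfl, rfl⟩ | ⟨rfl, rfl⟩
      · exact List.Perm.refl _
      · exact List.Perm.swap _ _ _
    rw [e1] at hk
    rw [e1 c d, e1 d c, e3, e2]
    exact tau_spec hk
  have hkj := K_tau (i := j) h
  have hki := K_tau (i := p.length + 1) h
  by_cases hb : ok (p ++ [b]) <;> by_cases hd : ok (p ++ [a,b] ++ q ++ [d])
  · rw [(tau_spec h).1 hb] at hki ⊢
    rw [(key _ _ (Or.inl ⟨rfl, rfl⟩) h).1 hd] at hkj ⊢
    rw [(key _ _ (Or.inr ⟨rfl, rfl⟩) hki).1 hd, (tau_spec hkj).1 hb]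
  · rw [(tau_spec h).1 hb] at hki ⊢
    rw [(key _ _ (Or.inl ⟨rfl, rfl⟩) h).2 hd] at hkj ⊢
    rw [(key _ _ (Or.inr ⟨rfl, rfl⟩) hki).2 hd, (tau_spec hkj).1 hb]
  · rw [(tau_spec h).2 hb] at hki ⊢
    rw [(key _ _ (Or.inl ⟨rfl, rfl⟩) h).1 hd] at hkj ⊢
    rw [(tau_spec hkj).2 hb]
  · rw [(tau_spec h).2 hb] at hki ⊢
    rw [(key _ _ (Or.inl ⟨rfl, rfl⟩) h).2 hd] at hkj ⊢
    rw [(tau_spec hkj).2 hb]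

theorem K_down {n : ℕ} {w : List KLetter} (h : IsKrewerasWord n w) (j : ℕ) :
    IsKrewerasWord n (tauDown n j w) := by
  induction j with
  | zero => exact h
  | succ j ih => exact K_tau ih

theorem K_evacAux {n : ℕ} (j : ℕ) : ∀ {w : List KLetter}, IsKrewerasWord n w →
    IsKrewerasWord n (evacAux n j w) := by
  induction j with
  | zero => exact fun h => h
  | succ j ih => exact fun h => ih (K_down h _)

theorem down_comm {n k j : ℕ} {w : List KLetter} (h : IsKrewerasWord n w)
    (hkj : k + 2 ≤ j) (hj : j + 1 ≤ 3 * n) :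
    tau n j (tauDown n k w) = tauDown n k (tau n j w) := by
  induction k with
  | zero => rfl
  | succ k ih =>
    simp only [tauDown]
    rw [tau_comm (K_down h k) (by omega) (by omega) hj, ih (by omega)]

theorem evacAux_comm {n k j : ℕ} (hkj : k + 2 ≤ j) (hj : j + 1 ≤ 3 * n) :
    ∀ {w : List KLetter}, IsKrewerasWord n w →
    tau n j (evacAux n k w) = evacAux n k (tau n j w) := by
  induction k with
  | zero => intro w _; rfl
  | succ k ih =>
    intro w h
    simp only [evacAux]
    rw [ih (by omega) (K_down h _), down_comm h hkj hj]

/-- `D_M ∘ E_M = E_{M-1}`. -/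
theorem down_evac {n M : ℕ} (hM : M + 2 ≤ 3 * n) : ∀ {w : List KLetter}, IsKrewerasWord n w →
    tauDown n (M + 1) (evacAux n (M + 1) w) = evacAux n M w := by
  induction M with
  | zero =>
    intro w h
    simp only [tauDown, evacAux]
    exact tau_tau h (by omega) (by omega)
  | succ M ih =>
    intro w h
    have e : tauDown n (M + 1 + 1) (evacAux n (M + 1 + 1) w) =
      tau n (M + 2) (tauDown n (M + 1) (evacAux n (M + 1) (tauDown n (M + 2) w))) := rfl
    rw [e, ih (by omega) (K_down h _), evacAux_comm (by omega) (by omega) (K_down h _)]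
    have e : tauDown n (M + 2) w = tau n (M + 2) (tauDown n (M + 1) w) := rfl
    rw [e, tau_tau (K_down h _) (by omega) (by omega)]
    rfl

theorem down_surj {n : ℕ} (j : ℕ) (hj : j + 1 ≤ 3 * n) {w : List KLetter}
    (h : IsKrewerasWord n w) : ∃ v, IsKrewerasWord n v ∧ tauDown n j v = w := by
  induction j generalizing w with
  | zero => exact ⟨w, h, rfl⟩
  | succ j ih =>
    obtain ⟨v, hv, e⟩ := ih (by omega) (K_tau (i := j + 1) h)
    exact ⟨v, hv, by simp only [tauDown, e]; exact tau_tau h (by omega) hj⟩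

/-- `Dec s u L v`: `s` decomposes as `A u L v`, where `L` is the first return. -/
def Dec (s u : List KLetter) (L : KLetter) (v : List KLetter) : Prop :=
  s = A :: u ++ L :: v ∧ L ≠ A ∧ (A :: u).count A = (A :: u).count L + 1 ∧
  ∀ l, l <+: u → ∀ X, X ≠ A → l.count X ≤ l.count A

/-- The first return of `s` is by the letter `L`. -/
def Ret (s : List KLetter) (L : KLetter) : Prop := ∃ u v, Dec s u L v

theorem ret_append {s : List KLetter} {L : KLetter} (h : Ret s L) (t : List KLetter) :
    Ret (s ++ t) L := by
  obtain ⟨u, v, rfl, h2, h3, h4⟩ := h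
  exact ⟨u, v ++ t, by simp, h2, h3, h4⟩

/-- Existence of a first return. -/
theorem ret_exists (s : List KLetter) (X : KLetter) (hX : X ≠ A)
    (h : s.count A < s.count X) : ∃ L, Ret (A :: s) L := by
  classical
  have hex : ∃ k, ∃ X, X ≠ A ∧ (s.take k).count A < (s.take k).count X :=
    ⟨s.length, X, hX, by simpa using h⟩
  obtain ⟨Y, hY, hk⟩ := Nat.find_spec hex
  have hmin := fun m hm => Nat.find_min hex (m := m) hm
  generalize Nat.find hex = k at hk hmin
  rcases k with _ | k
  · simp at hk
  by_cases hlen : k < s.length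
  · have hm := hmin k (by omega)
    push Not at hm
    have hmY := hm Y hY
    rw [List.take_succ_eq_append_getElem hlen] at hk
    simp only [List.count_append, List.count_singleton] at hk
    have hYe : s[k] = Y := by
      by_contra hne
      simp [hne] at hk
      omega
    have hne : s[k] ≠ A := by rw [hYe]; exact hY
    simp [hYe, hY] at hk
    refine ⟨Y, s.take k, s.drop (k + 1), ?_, hY, ?_, ?_⟩
    · rw [← hYe]; simp
    · have : A ≠ Y := fun e => hY e.symm
      simp [List.count_cons, this]; omega
    · intro l hl X hX
      have hl2 := hl.length_le
      have hl3 : l = s.take l.length := by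
        have := List.prefix_iff_eq_take.1 (hl.trans (List.take_prefix _ _))
        exact this
      rw [List.length_take] at hl2
      have := hmin l.length (by omega)
      push Not at this
      have := this X hX
      rwa [← hl3] at this
  · exfalso
    apply hmin k (by omega)
    refine ⟨Y, hY, ?_⟩
    rwa [List.take_of_length_le (by omega)] at hk ⊢

theorem ok_count {l : List KLetter} (h : ok l) {X : KLetter} (hX : X ≠ A) :
    l.count X ≤ l.count A := by
  cases X
  · exact absurd rfl hX
  · exact h.1
  · exact h.2

theorem K_count {n : ℕ} {w : List KLetter} (h : IsKrewerasWord n w) (X : KLetter) :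
    w.count X = n := by
  cases X
  · exact h.2.1
  · exact h.2.2.1
  · exact h.2.2.2.1

theorem K_ret {n : ℕ} (hn : 1 ≤ n) {w : List KLetter} (h : IsKrewerasWord n w) :
    ∃ L u v, Dec w u L v := by
  have hl := h.1
  rcases w with _ | ⟨x, s⟩
  · simp at hl; omega
  have hx : x = A := by
    have := K_ok h (l := [x]) ⟨s, by simp⟩
    cases x
    · rfl
    · simp [ok] at this
    · simp [ok] at this
  subst hx
  have h1 := K_count h A
  have h2 := K_count h B
  simp [List.count_cons] at h1 h2
  obtain ⟨L, u, v, hd⟩ := ret_exists s B (by simp) (by omega)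
  exact ⟨L, u, v, hd⟩

theorem dec_kiota {w u v : List KLetter} {L : KLetter} (h : Dec w u L v) :
    kiota w = u.length + 2 := by
  obtain ⟨rfl, h2, h3, h4⟩ := h
  unfold kiota
  rw [List.headD_eq_head?_getD, List.head?_filter]
  have : (List.range ((A :: u ++ L :: v).length + 1)).find? (fun k =>
      decide (1 ≤ k) &&
      ((((A :: u ++ L :: v).take k).count A == ((A :: u ++ L :: v).take k).count B) ||
       (((A :: u ++ L :: v).take k).count A == ((A :: u ++ L :: v).take k).count C))) =
      some (u.length + 2) := by
    rw [List.find?_range_eq_some]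
    refine ⟨?_, by simp, ?_⟩
    · have e : (A :: u ++ L :: v).take (u.length + 2) = A :: u ++ [L] := by
        simp [List.take_append, List.take_of_length_le]
      rw [e]
      have hA : (A :: u ++ [L]).count A = (A :: u ++ [L]).count L := by
        rw [List.count_append, List.count_append, h3]
        simp [h2]
      cases L
      · exact absurd rfl h2
      · rw [hA]; simp
      · rw [hA]; simp
    · intro j hj
      rcases j with _ | j
      · simp
      · have e : (A :: u ++ L :: v).take (j + 1) = A :: u.take j := by
          simp [List.take_append, show j - u.length = 0 ∨ j = u.length + 1 by omega]
          omega
        rw [e]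
        have hB := h4 (u.take j) (List.take_prefix _ _) B (by simp)
        have hC := h4 (u.take j) (List.take_prefix _ _) C (by simp)
        simp [List.count_cons]
        omega
  rw [this]; rfl

/-- `ε_w(1)`. -/
def eps (w : List KLetter) : KLetter := w.getD (kiota w - 1) A

theorem dec_eps {w u v : List KLetter} {L : KLetter} (h : Dec w u L v) : eps w = L := by
  unfold eps
  rw [dec_kiota h, h.1]
  simp [List.getD]

theorem ret_eps {w : List KLetter} {L : KLetter} (h : Ret w L) : eps w = L := by
  obtain ⟨u, v, h⟩ := h
  exact dec_eps h

theorem dec_pro {w u v : List KLetter} {L : KLetter} (h : Dec w u L v) :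
    pro w = u ++ A :: v ++ [L] := by
  have := dec_eps h
  unfold eps at this
  unfold pro
  rw [this, dec_kiota h, h.1]
  simp [List.set_append]

/-- Intermediate forms of `tauDown`, before the first return. -/
theorem down_form1 {n : ℕ} {w u v : List KLetter} {L : KLetter} (hw : IsKrewerasWord n w)
    (h : Dec w u L v) : ∀ u1 u2, u = u1 ++ u2 →
    tauDown n u1.length w = u1 ++ A :: u2 ++ L :: v := by
  intro u1
  induction u1 using List.reverseRecOn with
  | nil => intro u2 hu; rw [h.1, hu]; rfl
  | append_singleton u1 x ih =>
    intro u2 hu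
    have ih := ih (x :: u2) (by simp [hu])
    have hk := K_down hw u1.length
    rw [List.length_append, List.length_singleton]
    simp only [tauDown]
    rw [ih] at hk ⊢
    have e : u1 ++ A :: x :: u2 ++ L :: v = u1 ++ A :: x :: (u2 ++ L :: v) := by simp
    rw [e] at hk ⊢
    rw [(tau_spec hk).1]
    · simp
    · have hp : u1 ++ [x] <+: u := ⟨u2, hu.symm⟩
      exact ⟨h.2.2.2 _ hp B (by simp), h.2.2.2 _ hp C (by simp)⟩

theorem dec_bad {w u v : List KLetter} {L : KLetter} (h : Dec w u L v) : ¬ ok (u ++ [L]) := by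
  intro hk
  have := ok_count hk h.2.1
  have h3 := h.2.2.1
  have hL := h.2.1
  have : A ≠ L := fun e => hL e.symm
  simp [List.count_cons, List.count_append, *] at *
  omega

/-- Intermediate forms of `tauDown`, after the first return. -/
theorem down_form2 {n : ℕ} {w u v : List KLetter} {L : KLetter} (hw : IsKrewerasWord n w)
    (h : Dec w u L v) : ∀ v1 v2, v = v1 ++ v2 →
    tauDown n (u.length + 1 + v1.length) w = u ++ A :: v1 ++ L :: v2 := by
  intro v1
  induction v1 using List.reverseRecOn with
  | nil =>
    intro v2 hv
    have e := down_form1 hw h u [] (by simp)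
    have hk := K_down hw u.length
    simp only [List.length_nil, Nat.add_zero, tauDown]
    rw [e] at hk ⊢
    have e : u ++ [A] ++ L :: v = u ++ A :: L :: v := by simp
    rw [e] at hk ⊢
    rw [(tau_spec hk).2 (dec_bad h), hv]
    simp
  | append_singleton v1 x ih =>
    intro v2 hv
    have ih := ih (x :: v2) (by simp [hv])
    have hk := K_down hw (u.length + 1 + v1.length)
    rw [List.length_append, List.length_singleton, ← Nat.add_assoc]
    simp only [tauDown]
    have e2 : u.length + 1 + v1.length = (u ++ A :: v1).length := by simp; omega
    rw [ih] at hk ⊢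
    rw [e2, (tau_spec hk).1]
    · simp
    · have hp : A :: u ++ L :: v1 ++ [x] <+: w := ⟨v2, by rw [h.1, hv]; simp⟩
      have hok := K_ok hw hp
      have hL := h.2.1
      unfold ok at *
      cases L
      · exact absurd rfl hL
      all_goals
        simp [List.count_cons, List.count_append] at hok ⊢
        omega

theorem pro_eq {n : ℕ} (hn : 1 ≤ n) {w : List KLetter} (hw : IsKrewerasWord n w) :
    pro w = tauDown n (3 * n - 1) w := by
  obtain ⟨L, u, v, h⟩ := K_ret hn hw
  have hl := hw.1
  rw [dec_pro h]
  have := down_form2 hw h v [] (by simp)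
  rw [← this]
  rw [h.1] at hl
  simp at hl
  congr 1
  omega

theorem K_pro {n : ℕ} (hn : 1 ≤ n) {w : List KLetter} (hw : IsKrewerasWord n w) :
    IsKrewerasWord n (pro w) := by
  rw [pro_eq hn hw]; exact K_down hw _

theorem K_pro_iter {n : ℕ} (hn : 1 ≤ n) {w : List KLetter} (hw : IsKrewerasWord n w) (i : ℕ) :
    IsKrewerasWord n (pro^[i] w) := by
  induction i with
  | zero => exact hw
  | succ i ih => rw [Function.iterate_succ_apply']; exact K_pro hn ih

theorem pro_surj {n : ℕ} (hn : 1 ≤ n) (i : ℕ) {w : List KLetter} (hw : IsKrewerasWord n w) :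
    ∃ v, IsKrewerasWord n v ∧ pro^[i] v = w := by
  induction i generalizing w with
  | zero => exact ⟨w, hw, rfl⟩
  | succ i ih =>
    obtain ⟨v, hv, e⟩ := down_surj (3 * n - 1) (by omega) hw
    rw [← pro_eq hn hv] at e
    obtain ⟨v', hv', e'⟩ := ih hv
    exact ⟨v', hv', by rw [Function.iterate_succ_apply', e', e]⟩

/-- The colour of an `A` not in first position is preserved by promotion. -/
theorem ret_pro {n : ℕ} (hn : 1 ≤ n) {w : List KLetter} (hw : IsKrewerasWord n w) {m : ℕ}
    {X : KLetter} (hX : Ret (w.drop (m + 1)) X) : Ret ((pro w).drop m) X := by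
  obtain ⟨L, u, v, h⟩ := K_ret hn hw
  rw [dec_pro h]
  rw [h.1] at hX
  simp only [List.cons_append, List.drop_succ_cons] at hX
  obtain ⟨_, hL, h3, h4⟩ := h
  rcases lt_trichotomy m u.length with hm | hm | hm
  · obtain ⟨u1, u2, rfl, rfl⟩ : ∃ u1 u2, u = u1 ++ u2 ∧ u1.length = m :=
      ⟨u.take m, u.drop m, by simp, by simp; omega⟩
    simp only [List.append_assoc, List.drop_left] at hX ⊢
    apply ret_append
    obtain ⟨u', v', hs, hX, h5, h6⟩ := hX
    rcases u2 with _ | ⟨z, u2⟩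
    · simp at hm
    simp only [List.cons_append, List.cons.injEq] at hs
    obtain ⟨rfl, hs⟩ := hs
    rcases List.append_eq_append_iff.1 hs with ⟨t, ht1, ht2⟩ | ⟨t, ht1, ht2⟩
    · exfalso
      have a1 := h6 u2 ⟨t, ht1.symm⟩ L hL
      have a2 := h4 u1 ⟨_, rfl⟩ L hL
      have : A ≠ L := fun e => hL e.symm
      simp [List.count_cons, List.count_append, this] at h3
      omega
    · rcases t with _ | ⟨y, t⟩
      · exfalso
        simp at ht1
        subst ht1
        have a1 := h6 u2 ⟨[], by simp⟩ L hL
        have a2 := h4 u1 ⟨_, rfl⟩ L hL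
        have : A ≠ L := fun e => hL e.symm
        simp [List.count_cons, List.count_append, this] at h3
        omega
      · simp at ht2
        obtain ⟨rfl, rfl⟩ := ht2
        exact ⟨u', t, by simp [ht1], hX, h5, h6⟩
  · subst hm
    rw [List.drop_left] at hX
    obtain ⟨u', v', hs, _⟩ := hX
    simp at hs
    exact absurd hs.1 hL
  · obtain ⟨k, rfl⟩ : ∃ k, m = u.length + (k + 1) := ⟨m - u.length - 1, by omega⟩
    rw [List.drop_length_add_append] at hX
    simp only [List.append_assoc]
    rw [List.drop_length_add_append]
    simp only [List.cons_append, List.drop_succ_cons] at hX ⊢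
    have hk : k ≤ v.length := by
      by_contra hk
      rw [List.drop_eq_nil_of_le (by omega)] at hX
      obtain ⟨_, _, hs, _⟩ := hX
      simp at hs
    rw [List.drop_append_of_le_length hk]
    exact ret_append hX _

theorem negL_ne {L : KLetter} (h : L ≠ A) : negL L ≠ A ∧ negL L ≠ L ∧
    ∀ X, X ≠ A → X ≠ L → X = negL L := by
  cases L
  · exact absurd rfl h
  all_goals
    refine ⟨by simp [negL], by simp [negL], ?_⟩
    intro X; cases X <;> simp [negL]

/-- The new `A` created by promotion has the opposite colour. -/
theorem ret_new {n : ℕ} {w u v : List KLetter} {L : KLetter} (hw : IsKrewerasWord n w)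
    (h : Dec w u L v) : Ret ((pro w).drop u.length) (negL L) := by
  rw [dec_pro h]
  simp only [List.append_assoc, List.drop_left]
  obtain ⟨hwe, hL, h3, h4⟩ := h
  obtain ⟨n1, n2, n3⟩ := negL_ne hL
  have hAL : A ≠ L := fun e => hL e.symm
  have hAN : A ≠ negL L := fun e => n1 e.symm
  have hLN : L ≠ negL L := fun e => n2 e.symm
  have c1 := K_count hw A
  have c2 := K_count hw (negL L)
  have c3 := h4 u ⟨[], by simp⟩ _ n1
  rw [hwe] at c1 c2
  simp [List.count_cons, List.count_append, hAN, hL, hLN] at c1 c2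
  obtain ⟨X, hX⟩ := ret_exists v (negL L) n1 (by omega)
  have : X = negL L := by
    obtain ⟨u', v', hs, x2, x3, x4⟩ := hX
    apply n3 X x2
    rintro rfl
    simp at hs
    have hp : A :: u ++ X :: (u' ++ [X]) <+: w := ⟨v', by rw [hwe, hs]; simp⟩
    have := ok_count (K_ok hw hp) hL
    simp [List.count_cons, List.count_append, hL, hAL] at this x3 h3
    omega
  subst this
  exact ret_append hX _

theorem ret_iter {n : ℕ} (hn : 1 ≤ n) (m : ℕ) : ∀ {w : List KLetter}, IsKrewerasWord n w →
    ∀ {X : KLetter}, Ret (w.drop m) X → Ret (pro^[m] w) X := by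
  induction m with
  | zero => intro w _ X h; simpa using h
  | succ m ih =>
    intro w hw X h
    rw [Function.iterate_succ_apply]
    exact ih (K_pro hn hw) (ret_pro hn hw h)

theorem ret_letter {n : ℕ} (hn : 1 ≤ n) (m : ℕ) : ∀ {w : List KLetter}, IsKrewerasWord n w →
    ∀ {X : KLetter}, X ≠ A → w[m]? = some X → Ret (pro^[m] w) (negL X) := by
  induction m with
  | zero =>
    intro w hw X hX h
    obtain ⟨L, u, v, hd⟩ := K_ret hn hw
    rw [hd.1] at h
    simp at h
    exact absurd h.symm hX
  | succ m ih =>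
    intro w hw X hX h
    rw [Function.iterate_succ_apply]
    obtain ⟨L, u, v, hd⟩ := K_ret hn hw
    by_cases hm : m = u.length
    · have : X = L := by
        rw [hd.1, hm] at h
        simp at h
        exact h.symm
      subst this
      have := ret_new hw hd
      rw [← hm] at this
      exact ret_iter hn m (K_pro hn hw) this
    · apply ih (K_pro hn hw) hX
      rw [dec_pro hd]
      rw [hd.1] at h
      simp only [List.cons_append, List.getElem?_cons_succ] at h
      simp only [List.append_assoc]
      rcases lt_or_gt_of_ne hm with hm | hm
      · rw [List.getElem?_append_left hm] at h ⊢
        exact h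
      · rw [List.getElem?_append_right hm.le] at h ⊢
        obtain ⟨k, hk⟩ : ∃ k, m - u.length = k + 1 := ⟨m - u.length - 1, by omega⟩
        rw [hk] at h ⊢
        simp only [List.cons_append, List.getElem?_cons_succ] at h ⊢
        have : k < v.length := (List.getElem?_eq_some_iff.1 h).1
        rw [List.getElem?_append_left this]
        exact h

theorem pro_last {n : ℕ} (hn : 1 ≤ n) {w : List KLetter} (hw : IsKrewerasWord n w) :
    (pro w)[3 * n - 1]? = some (eps w) := by
  obtain ⟨L, u, v, hd⟩ := K_ret hn hw
  have hl := hw.1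
  rw [hd.1] at hl
  simp at hl
  rw [dec_pro hd, dec_eps hd, List.getElem?_append_right (by simp; omega)]
  have : 3 * n - 1 - (u ++ A :: v).length = 0 := by simp; omega
  rw [this]; rfl

theorem eps_period {n : ℕ} (hn : 1 ≤ n) {w : List KLetter} (hw : IsKrewerasWord n w) :
    eps (pro^[3 * n] w) = negL (eps w) := by
  have h1 := pro_last hn hw
  have h2 : eps w ≠ A := by
    obtain ⟨L, u, v, hd⟩ := K_ret hn hw
    rw [dec_eps hd]; exact hd.2.1
  have := ret_eps (ret_letter hn _ (K_pro hn hw) h2 h1)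
  rw [← Function.iterate_succ_apply] at this
  rwa [show (3 * n - 1).succ = 3 * n by omega] at this

theorem tau_last {n i : ℕ} {w : List KLetter} {m : ℕ} (h : i < m) (hi : 1 ≤ i) :
    (tau n i w)[m]? = w[m]? := by
  unfold tau
  simp only
  split_ifs
  · rw [List.getElem?_set_ne (by omega), List.getElem?_set_ne (by omega)]
  · rfl

theorem down_last {n j m : ℕ} {w : List KLetter} (h : j < m) :
    (tauDown n j w)[m]? = w[m]? := by
  induction j with
  | zero => rfl
  | succ j ih => simp only [tauDown]; rw [tau_last h (by omega), ih (by omega)]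

theorem evacAux_last {n j m : ℕ} (h : j < m) : ∀ {w : List KLetter},
    (evacAux n j w)[m]? = w[m]? := by
  induction j with
  | zero => intro w; rfl
  | succ j ih => intro w; simp only [evacAux]; rw [ih (by omega), down_last h]

theorem evac_eq {n : ℕ} (hn : 1 ≤ n) (w : List KLetter) (hw : IsKrewerasWord n w) :
    evac n w = evacAux n (3 * n - 2) (pro w) := by
  rw [pro_eq hn hw]
  obtain ⟨k, hk⟩ : ∃ k, 3 * n - 1 = k + 1 := ⟨3 * n - 2, by omega⟩
  have : 3 * n - 2 = k := by omega
  unfold evac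
  rw [hk, this]
  rfl

theorem evac_last {n : ℕ} (hn : 1 ≤ n) {w : List KLetter} (hw : IsKrewerasWord n w) :
    (evac n w)[3 * n - 1]? = some (eps w) := by
  rw [evac_eq hn w hw, evacAux_last (by omega), pro_last hn hw]

theorem K_evac {n : ℕ} {w : List KLetter} (hw : IsKrewerasWord n w) :
    IsKrewerasWord n (evac n w) := K_evacAux _ hw

theorem pro_evac_pro {n : ℕ} (hn : 1 ≤ n) {w : List KLetter} (hw : IsKrewerasWord n w) :
    pro (evac n (pro w)) = evac n w := by
  rw [pro_eq hn (K_evac (K_pro hn hw)), evac_eq hn w hw]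
  obtain ⟨k, hk⟩ : ∃ k, 3 * n - 1 = k + 1 := ⟨3 * n - 2, by omega⟩
  have : 3 * n - 2 = k := by omega
  unfold evac
  rw [hk, this]
  exact down_evac (by omega) (K_pro hn hw)

theorem pro_evac_iter {n : ℕ} (hn : 1 ≤ n) (i : ℕ) {w : List KLetter}
    (hw : IsKrewerasWord n w) : pro^[i] (evac n (pro^[i] w)) = evac n w := by
  induction i with
  | zero => rfl
  | succ i ih =>
    rw [Function.iterate_succ_apply, Function.iterate_succ_apply',
      pro_evac_pro hn (K_pro_iter hn hw i), ih]

end KE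

/-- `ε_{evac(w)}(i) = -ε_w(3n+1-i)` for all `i ∈ {1, …, 3n}`, where `-B = C`
and `-C = B`. -/
theorem keps_evac (n : ℕ) (w : List KLetter) (hw : IsKrewerasWord n w) :
    ∀ i : ℕ, 1 ≤ i → i ≤ 3 * n →
      keps (evac n w) i = negL (keps w (3 * n + 1 - i)) := by
  intro i hi hi'
  have hn : 1 ≤ n := by omega
  obtain ⟨v, hv, rfl⟩ := KE.pro_surj hn i hw
  have h1 : keps (evac n (pro^[i] v)) i = KE.eps v := by
    have hk := KE.K_pro_iter hn (KE.K_evac hw) (i - 1)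
    have a := KE.pro_last hn hk
    rw [← Function.iterate_succ_apply' pro, show (i - 1).succ = i by omega,
      KE.pro_evac_iter hn i hv, KE.evac_last hn hv] at a
    exact (Option.some.inj a).symm
  have h2 : keps (pro^[i] v) (3 * n + 1 - i) = negL (KE.eps v) := by
    rw [← KE.eps_period hn hv]
    show KE.eps (pro^[3 * n + 1 - i - 1] (pro^[i] v)) = _
    rw [← Function.iterate_add_apply, show 3 * n + 1 - i - 1 + i = 3 * n by omega]
  rw [h1, h2]
  cases KE.eps v <;> rfl
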